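/- arXiv:2605.20338 — 2 statements merged into one kernel-verified Lean document; each statement's English description precedes it below -/
import Mathlib

section
/- Let N = 2M−1 be an odd positive integer (so M = (N+1)/2). Let σ_1,…,σ_N and η_1,…,η_N be complex numbers with ∑_{i=1}^N σ_i = 0, ∑_{i=1}^N η_i = 0, and σ_i − σ_j ∉ ℤ for all i ≠ j. Set Σ_i = exp(2πi·σ_i) (pairwise distinct), ζ_i = exp(2πi·η_i), and ρ_i = (N−2i+1)/2. Let V be the N×N Vandermonde matrix V_{ij} = Σ_i^{j−1}, T = diag(ζ_1,…,ζ_N), and E = V^{−1}TV. Then the determinant of the bottom-left M×M submatrix of E (rows N−M+1,…,N, columns 1,…,M) equals ∑_{S ⊆ {1,…,N}, |S| = M} exp(iπ ∑_{i∈S}(2η_i − ρ_i + σ_i)) · ∏ (2 sin(π(σ_i − σ_j)))^{−1}, where the product runs over all pairs 1 ≤ i < j ≤ N such that exactly one of i, j belongs to S. -/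
open Finset Matrix

/-!
Write `k = N - M`, let `V` be the Vandermonde matrix and `V_k`, `V_M` its first `k` and `M`
columns. Since `V * E = T * V`, multiplying the minor by `det V` gives the determinant of
`[V_k | T * V_M]`. Expanding it by multilinearity in the rows selects the set `S` of rows whose
last `M` entries survive; only `#S = M` contributes, and the corresponding term is, up to sign, the
product of the Vandermonde determinants of `Sᶜ` and `S`. Dividing by `det V` leaves
`∏ i ∉ S, ∏ j ∈ S, (Σ_j - Σ_i)⁻¹`.

Each difference is `Σ_j - Σ_i = exp (iπ (1/2 + σ_i + σ_j)) * 2 sin (π (σ_j - σ_i))`. Sorting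
every pair so that the smaller index comes first costs one sign per pair `i < j` with `i ∉ S` and
`j ∈ S`, and the number of such pairs is `∑ j ∈ S, j` (indices from `0`) minus `#S.choose 2`. The
quarter-turns `1/2` and these signs combine into `-∑ j ∈ S, ρ_j`.
-/

section Determinants

variable {R n : Type*} [CommRing R] [Fintype n] [DecidableEq n]

theorem det_eq_zero_of_blocks_card_ne {A : Matrix n n R} {s t : Finset n}
    (hA : ∀ i j, ¬(i ∈ s ↔ j ∈ t) → A i j = 0) (hst : #s ≠ #t) : A.det = 0 := by
  rw [det_apply]
  refine sum_eq_zero fun τ _ => ?_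
  obtain ⟨j, hj⟩ : ∃ j, ¬(τ j ∈ s ↔ j ∈ t) := by
    by_contra! h
    have hs : s = t.map τ.toEmbedding := by
      ext i
      rw [mem_map_equiv, ← h, τ.apply_symm_apply]
    exact hst (by rw [hs, card_map])
  have hprod : ∏ j, A (τ j) j = 0 := prod_eq_zero (mem_univ j) (hA _ _ hj)
  rw [hprod, smul_zero]

theorem det_add_smul_rows (a b : n → n → R) (ζ : n → R) :
    (of fun i => a i + ζ i • b i).det =
      ∑ s : Finset n, (∏ i ∈ s, ζ i) * (of (s.piecewise b a)).det := by
  have hexpand := (detRowAlternating (n := n) (R := R)).map_add_univ (fun i => ζ i • b i) a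
  rw [add_comm] at hexpand
  refine hexpand.trans (sum_congr rfl fun s _ => ?_)
  have hrows : s.piecewise (fun i => ζ i • b i) a =
      of fun i j => (if i ∈ s then ζ i else 1) * s.piecewise b a i j := by
    ext i j
    by_cases hi : i ∈ s <;> simp [hi]
  rw [hrows]
  refine (det_mul_column _ (of (s.piecewise b a))).trans ?_
  rw [prod_ite_mem, univ_inter]

end Determinants

section AppendedColumns

variable {R : Type*} [CommRing R] {k m : ℕ}

theorem det_append_mul_columns (A : Matrix (Fin (k + m)) (Fin (k + m)) R)
    (C : Matrix (Fin (k + m)) (Fin m) R) :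
    (of fun i => Fin.append (fun a => A i (Fin.castAdd m a)) ((A * C) i)).det =
      A.det * (C.submatrix (Fin.natAdd k) id).det := by
  let F : Matrix (Fin (k + m)) (Fin (k + m)) R :=
    (fromBlocks 1 (C.submatrix (Fin.castAdd m) id) 0 (C.submatrix (Fin.natAdd k) id)).submatrix
      finSumFinEquiv.symm finSumFinEquiv.symm
  have hF : F.det = (C.submatrix (Fin.natAdd k) id).det := by
    rw [det_submatrix_equiv_self, det_fromBlocks_zero₂₁, det_one, one_mul]
  rw [← hF, ← det_mul]
  congr 1
  ext i j
  induction j using Fin.addCases <;> simp [F, mul_apply, Fin.sum_univ_add, one_apply]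

theorem det_vandermonde_append (u : Fin k → R) (w : Fin m → R) :
    (vandermonde (Fin.append u w)).det =
      (vandermonde u).det * (vandermonde w).det * ∏ i, ∏ j, (w j - u i) := by
  have hIoi : ∀ {l : ℕ} (i : Fin l) (f : Fin l → R),
      ∏ j ∈ Ioi i, f j = ∏ j, if i < j then f j else 1 := fun i f => by
    rw [← prod_filter, filter_lt_eq_Ioi]
  have hlt : ∀ (a : Fin k) (b : Fin m), Fin.castAdd m a < Fin.natAdd k b := fun a b => by
    simp [Fin.lt_def]; omega
  simp only [det_vandermonde, hIoi, Fin.prod_univ_add, Fin.append_left, Fin.append_right, hlt,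
    (hlt _ _).not_gt, if_true, if_false, prod_const_one, prod_mul_distrib, Fin.natAdd_lt_natAdd_iff,
    (Fin.strictMono_castAdd m).lt_iff_lt]
  ring

/-- The `k`-column and `m`-column Vandermonde matrices of `v` side by side, where row `i` keeps only
its last `m` entries if `i ∈ s` and only its first `k` entries otherwise. These are the matrices
into which `[V_k | diagonal ζ * V_m]` splits when its determinant is expanded in `ζ`. -/
def splitVandermonde (v : Fin (k + m) → R) (s : Finset (Fin (k + m))) :
    Matrix (Fin (k + m)) (Fin (k + m)) R :=
  of (s.piecewise (fun i => Fin.append 0 fun b => v i ^ (b : ℕ))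
    fun i => Fin.append (fun a => v i ^ (a : ℕ)) 0)

theorem det_splitVandermonde_of_card_ne (v : Fin (k + m) → R) {s : Finset (Fin (k + m))}
    (hs : #s ≠ m) : (splitVandermonde v s).det = 0 := by
  refine det_eq_zero_of_blocks_card_ne (s := s) (t := univ.map (Fin.natAddEmb k))
    (fun i j hij => ?_) (by simpa using hs)
  by_cases hi : i ∈ s <;> induction j using Fin.addCases <;>
    simp_all [splitVandermonde, Fin.ext_iff]
  omega

theorem det_splitVandermonde_mul_prod_sub (v : Fin (k + m) → R) {s : Finset (Fin (k + m))}
    (hs : #s = m) :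
    (splitVandermonde v s).det * ∏ i ∈ sᶜ, ∏ j ∈ s, (v j - v i) = (vandermonde v).det := by
  have hsc : #sᶜ = k := by simp [card_compl, hs]
  let p := sᶜ.orderEmbOfFin hsc
  let q := s.orderEmbOfFin hs
  let τ : Equiv.Perm (Fin (k + m)) :=
    finSumFinEquiv.symm.trans ((Equiv.sumComm _ _).trans (finSumEquivOfFinset hs hsc))
  have hτp : ∀ a, τ (Fin.castAdd m a) = p a := fun a => by simp [τ, p]
  have hτq : ∀ b, τ (Fin.natAdd k b) = q b := fun b => by simp [τ, q]
  have hp : ∀ a, p a ∉ s := fun a => mem_compl.mp (orderEmbOfFin_mem _ hsc a)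
  have hq : ∀ b, q b ∈ s := orderEmbOfFin_mem _ hs
  have hsplit : ((splitVandermonde v s).submatrix τ id).det =
      (vandermonde (v ∘ p)).det * (vandermonde (v ∘ q)).det := by
    rw [← det_submatrix_equiv_self finSumFinEquiv, ← det_fromBlocks_zero₁₂ _ 0]
    congr 1
    ext i j
    rcases i with i | i <;> rcases j with j | j <;>
      simp [splitVandermonde, hτp, hτq, hp, hq, vandermonde_apply]
  have hvand : (vandermonde v).submatrix τ id = vandermonde (Fin.append (v ∘ p) (v ∘ q)) := by
    ext i j
    induction i using Fin.addCases <;> simp [hτp, hτq, vandermonde_apply]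
  have hprod : ∏ i ∈ sᶜ, ∏ j ∈ s, (v j - v i) = ∏ a, ∏ b, ((v ∘ q) b - (v ∘ p) a) :=
    calc
      _ = ∏ i ∈ univ.map p.toEmbedding, ∏ j ∈ univ.map q.toEmbedding, (v j - v i) := by
        rw [map_orderEmbOfFin_univ, map_orderEmbOfFin_univ]
      _ = _ := by simp only [prod_map]; rfl
  have hsign : IsUnit ((τ.sign : ℤ) : R) := τ.sign.isUnit.map (Int.castRingHom R)
  apply hsign.mul_left_cancel
  rw [← mul_assoc, ← det_permute, ← det_permute, hvand, det_vandermonde_append, hsplit, hprod]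

theorem det_vandermonde_mul_det_bottomLeft {v ζ : Fin (k + m) → R}
    {E : Matrix (Fin (k + m)) (Fin (k + m)) R}
    (hE : vandermonde v * E = diagonal ζ * vandermonde v) :
    (vandermonde v).det *
        (E.submatrix (Fin.natAdd k) (Fin.castLE (Nat.le_add_left m k))).det =
      ∑ s ∈ powersetCard m univ, (∏ i ∈ s, ζ i) * (splitVandermonde v s).det := by
  let leftCols (A : Matrix (Fin (k + m)) (Fin (k + m)) R) : Matrix (Fin (k + m)) (Fin m) R :=
    A.submatrix id (Fin.castLE (Nat.le_add_left m k))
  have hcols : vandermonde v * leftCols E = leftCols (diagonal ζ * vandermonde v) :=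
    congrArg leftCols hE
  calc
    _ = (of fun i => Fin.append (fun a => vandermonde v i (Fin.castAdd m a))
          (leftCols (diagonal ζ * vandermonde v) i)).det := by
      rw [← hcols]
      exact (det_append_mul_columns _ (leftCols E)).symm
    _ = ∑ s : Finset (Fin (k + m)), (∏ i ∈ s, ζ i) * (splitVandermonde v s).det := by
      refine (congrArg det ?_).trans (det_add_smul_rows _ _ ζ)
      ext i j
      induction j using Fin.addCases <;> simp [leftCols, vandermonde_apply, diagonal_mul]
    _ = ∑ s ∈ powersetCard m univ, (∏ i ∈ s, ζ i) * (splitVandermonde v s).det := by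
      refine (sum_subset (subset_univ _) fun s _ hs => ?_).symm
      rw [det_splitVandermonde_of_card_ne v (by simpa [mem_powersetCard] using hs), mul_zero]

end AppendedColumns

theorem prod_compl_prod_sub_ne_zero {ι R : Type*} [Fintype ι] [DecidableEq ι] [CommRing R]
    [IsDomain R] {v : ι → R} (hv : Function.Injective v) (s : Finset ι) :
    ∏ i ∈ sᶜ, ∏ j ∈ s, (v j - v i) ≠ 0 :=
  prod_ne_zero_iff.mpr fun _ hi => prod_ne_zero_iff.mpr fun _ hj =>
    sub_ne_zero.mpr fun h => mem_compl.mp hi (hv h ▸ hj)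

theorem det_bottomLeft_vandermonde_conj {K : Type*} [Field K] {k m : ℕ} {v : Fin (k + m) → K}
    (hv : Function.Injective v) (ζ : Fin (k + m) → K) :
    (((vandermonde v)⁻¹ * diagonal ζ * vandermonde v).submatrix
        (Fin.natAdd k) (Fin.castLE (Nat.le_add_left m k))).det =
      ∑ s ∈ powersetCard m univ, (∏ i ∈ s, ζ i) * ∏ i ∈ sᶜ, ∏ j ∈ s, (v j - v i)⁻¹ := by
  have hV : (vandermonde v).det ≠ 0 := det_vandermonde_ne_zero_iff.mpr hv
  have hVE : vandermonde v * ((vandermonde v)⁻¹ * diagonal ζ * vandermonde v) =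
      diagonal ζ * vandermonde v := by
    rw [Matrix.mul_assoc, mul_nonsing_inv_cancel_left _ _ hV.isUnit]
  apply mul_left_cancel₀ hV
  rw [det_vandermonde_mul_det_bottomLeft hVE, mul_sum]
  refine sum_congr rfl fun s hs => ?_
  have hsplit : (splitVandermonde v s).det =
      (vandermonde v).det * ∏ i ∈ sᶜ, ∏ j ∈ s, (v j - v i)⁻¹ := by
    simp only [prod_inv_distrib]
    rw [eq_mul_inv_iff_mul_eq₀ (prod_compl_prod_sub_ne_zero hv s)]
    exact det_splitVandermonde_mul_prod_sub v (mem_powersetCard.mp hs).2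
  rw [hsplit, mul_left_comm]

section Pairs

variable {ι : Type*} [LinearOrder ι]

theorem prod_filter_lt_and_not_iff [Fintype ι] {α : Type*} [CommMonoid α] (s : Finset ι)
    (f : ι → ι → α) :
    ∏ p ∈ (univ ×ˢ univ).filter (fun p : ι × ι => p.1 < p.2 ∧ ¬((p.1 ∈ s) ↔ (p.2 ∈ s))),
      f p.1 p.2 = ∏ i ∈ sᶜ, ∏ j ∈ s, if i < j then f i j else f j i := by
  rw [← prod_product']
  refine prod_bij' (fun p _ => if p.1 ∈ s then p.swap else p)
    (fun q _ => if q.1 < q.2 then q else q.swap) ?_ ?_ ?_ ?_ ?_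
  all_goals
    rintro ⟨i, j⟩ h
    simp only [mem_filter, mem_product, mem_univ, true_and, mem_compl] at h
    grind [mem_compl]

theorem sum_card_filter_lt (s : Finset ι) : ∑ j ∈ s, #{i ∈ s | i < j} = (#s).choose 2 := by
  induction s using induction_on_max with
  | empty => rfl
  | insert a s ha ih =>
    have has : a ∉ s := fun h => lt_irrefl a (ha a h)
    have hlt : ∀ j ∈ s, {i ∈ insert a s | i < j} = {i ∈ s | i < j} := fun j hj => by
      rw [filter_insert, if_neg (ha j hj).not_gt]
    rw [sum_insert has, sum_congr rfl fun j hj => congrArg card (hlt j hj), ih, filter_insert,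
      if_neg (lt_irrefl a), filter_true_of_mem ha, card_insert_of_notMem has,
      Nat.choose_succ_succ', Nat.choose_one_right]

theorem sum_card_filter_compl_lt_add_choose {n : ℕ} (s : Finset (Fin n)) :
    ∑ j ∈ s, #{i ∈ sᶜ | i < j} + (#s).choose 2 = ∑ j ∈ s, (j : ℕ) := by
  rw [← sum_card_filter_lt, ← sum_add_distrib]
  refine sum_congr rfl fun j _ => ?_
  rw [add_comm, ← card_union_of_disjoint (disjoint_filter_filter disjoint_compl_right),
    ← filter_union, union_compl, filter_gt_eq_Iio, Fin.card_Iio]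

end Pairs

section Exponentials

open Complex

theorem exp_two_pi_mul_I_injective {ι : Type*} {σ : ι → ℂ}
    (hσ : ∀ i j, i ≠ j → ∀ n : ℤ, σ i - σ j ≠ n) :
    Function.Injective fun i => exp (2 * Real.pi * I * σ i) := by
  intro i j hij
  by_contra hne
  obtain ⟨n, hn⟩ := exp_eq_exp_iff_exists_int.mp hij
  refine hσ i j hne n (mul_left_cancel₀ two_pi_I_ne_zero ?_)
  linear_combination hn

theorem inv_exp_two_pi_mul_I_sub (a b : ℂ) :
    (exp (2 * Real.pi * I * b) - exp (2 * Real.pi * I * a))⁻¹ =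
      exp (Real.pi * I * (-(1 / 2) - (a + b))) * (2 * sin (Real.pi * (b - a)))⁻¹ := by
  have hI : exp (Real.pi * I * (1 / 2)) = I := by
    rw [mul_one_div, mul_div_right_comm, exp_pi_div_two_mul_I]
  have hsub : exp (2 * Real.pi * I * b) - exp (2 * Real.pi * I * a) =
      exp (Real.pi * I * (1 / 2 + (a + b))) * (2 * sin (Real.pi * (b - a))) := by
    have hb : exp (2 * Real.pi * I * b) =
        exp (Real.pi * I * (a + b)) * exp (Real.pi * (b - a) * I) := by
      rw [← exp_add]; ring_nf
    have ha : exp (2 * Real.pi * I * a) =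
        exp (Real.pi * I * (a + b)) * exp (-(Real.pi * (b - a)) * I) := by
      rw [← exp_add]; ring_nf
    rw [mul_add, exp_add, hI, two_sin, ha, hb]
    linear_combination (-exp (Real.pi * I * (a + b)) *
      (exp (-(Real.pi * (b - a)) * I) - exp (Real.pi * (b - a) * I))) * I_sq
  rw [hsub, mul_inv, ← Complex.exp_neg]
  ring_nf

theorem inv_exp_two_pi_mul_I_sub' (a b : ℂ) :
    (exp (2 * Real.pi * I * b) - exp (2 * Real.pi * I * a))⁻¹ =
      exp (Real.pi * I * (1 / 2 - (a + b))) * (2 * sin (Real.pi * (a - b)))⁻¹ := by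
  rw [← neg_sub, inv_neg, inv_exp_two_pi_mul_I_sub, ← neg_one_mul, ← exp_pi_mul_I, ← mul_assoc,
    ← exp_add]
  ring_nf

theorem prod_compl_inv_exp_sub {n : ℕ} (s : Finset (Fin n)) (σ : Fin n → ℂ) :
    ∏ i ∈ sᶜ, ∏ j ∈ s, (exp (2 * Real.pi * I * σ j) - exp (2 * Real.pi * I * σ i))⁻¹ =
      exp (-(Real.pi * I * (#s * ∑ i, σ i))) *
        (exp (Real.pi * I *
            ∑ i ∈ s, (-(((n : ℂ) - 2 * ((i : ℕ) : ℂ) - 1) / 2) + (2 * #s - n) * σ i)) *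
          ∏ p ∈ (univ ×ˢ univ).filter
              (fun p : Fin n × Fin n => p.1 < p.2 ∧ ¬((p.1 ∈ s) ↔ (p.2 ∈ s))),
            (2 * sin (Real.pi * (σ p.1 - σ p.2)))⁻¹) := by
  have hfactor : ∀ i j, (exp (2 * Real.pi * I * σ j) - exp (2 * Real.pi * I * σ i))⁻¹ =
      exp (Real.pi * I * ((if i < j then 1 else 0) - 1 / 2 - (σ i + σ j))) *
        if i < j then (2 * sin (Real.pi * (σ i - σ j)))⁻¹
        else (2 * sin (Real.pi * (σ j - σ i)))⁻¹ := by
    intro i j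
    split_ifs
    · rw [inv_exp_two_pi_mul_I_sub']; ring_nf
    · rw [inv_exp_two_pi_mul_I_sub]; ring_nf
  have hcard : (#sᶜ : ℂ) = n - #s := by
    rw [card_compl, Fintype.card_fin, Nat.cast_sub (card_finset_fin_le s)]
  have hσ : ∑ i ∈ sᶜ, σ i = ∑ i, σ i - ∑ i ∈ s, σ i := eq_sub_of_add_eq (sum_compl_add_sum s σ)
  have hinversions : ∑ i ∈ sᶜ, ∑ j ∈ s, (if i < j then (1 : ℂ) else 0) =
      ∑ j ∈ s, ((j : ℕ) : ℂ) - #s * (#s - 1) / 2 := by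
    rw [sum_comm, ← Nat.cast_choose_two, eq_sub_iff_add_eq]
    simp only [sum_boole]
    exact_mod_cast sum_card_filter_compl_lt_add_choose s
  rw [prod_filter_lt_and_not_iff s fun i j => (2 * sin (Real.pi * (σ i - σ j)))⁻¹, ← mul_assoc]
  simp only [hfactor, prod_mul_distrib, ← exp_sum, ← mul_sum, ← exp_add]
  congr 2
  simp only [sum_sub_distrib, sum_add_distrib, sum_neg_distrib, sum_const, hinversions, hσ,
    nsmul_eq_mul, hcard, ← mul_sum, ← sum_div]
  ring

end Exponentials

theorem bottomLeft_minor_odd_quantization_general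
    (N M : ℕ) (hMN : M ≤ N) (σ η : Fin N → ℂ)
    (hnonint : ∀ i j : Fin N, i ≠ j → ∀ n : ℤ, σ i - σ j ≠ (n : ℂ))
    (Sg ζ : Fin N → ℂ)
    (hSg : ∀ i, Sg i = Complex.exp (2 * Real.pi * Complex.I * σ i))
    (hζ : ∀ i, ζ i = Complex.exp (2 * Real.pi * Complex.I * η i)) :
    (((vandermonde Sg)⁻¹ * diagonal ζ * vandermonde Sg).submatrix
        (fun i : Fin M => (⟨N - M + i.val, by have := i.isLt; omega⟩ : Fin N))
        (Fin.castLE hMN)).det =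
      Complex.exp (-(Real.pi * Complex.I * (M * ∑ i, σ i))) *
        ∑ S ∈ powersetCard M univ,
          Complex.exp (Real.pi * Complex.I *
              ∑ i ∈ S, (2 * η i - ((N : ℂ) - 2 * ((i : ℕ) : ℂ) - 1) / 2 + (2 * M - N) * σ i)) *
            ∏ p ∈ (univ ×ˢ univ).filter
                (fun p : Fin N × Fin N => p.1 < p.2 ∧ ¬((p.1 ∈ S) ↔ (p.2 ∈ S))),
              (2 * Complex.sin ((Real.pi : ℂ) * (σ p.1 - σ p.2)))⁻¹ := by
  obtain ⟨k, rfl⟩ : ∃ k, N = k + M := Nat.exists_eq_add_of_le' hMN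
  obtain rfl : Sg = fun i => Complex.exp (2 * Real.pi * Complex.I * σ i) := funext hSg
  have hrows : (fun i : Fin M => (⟨k + M - M + i.val, by omega⟩ : Fin (k + M))) =
      Fin.natAdd k := by
    ext i; simp
  rw [hrows, det_bottomLeft_vandermonde_conj (exp_two_pi_mul_I_injective hnonint) ζ, mul_sum]
  refine sum_congr rfl fun S hS => ?_
  have hprodζ : ∏ i ∈ S, ζ i = Complex.exp (Real.pi * Complex.I * ∑ i ∈ S, 2 * η i) := by
    rw [mul_sum, Complex.exp_sum]
    exact prod_congr rfl fun i _ => by rw [hζ]; ring_nf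
  rw [hprodζ, prod_compl_inv_exp_sub, (mem_powersetCard.mp hS).2, mul_left_comm,
    ← mul_assoc (Complex.exp (_ * ∑ i ∈ S, 2 * η i)), ← Complex.exp_add, ← mul_add,
    ← sum_add_distrib]
  simp only [← add_assoc, ← sub_eq_add_neg]

/-- N odd, M = (N+1)/2: the determinant of the bottom-left M×M submatrix
of E = V⁻¹ T V equals
∑_{S ⊆ {1,…,N}, |S| = M} exp(iπ ∑_{i∈S}(2ηᵢ − ρᵢ + σᵢ)) ∏ (2 sin(π(σᵢ − σⱼ)))⁻¹,
the product over pairs i < j with exactly one of i, j in S. -/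
theorem bottomLeft_minor_odd_quantization
    (N M : ℕ) (hM : 1 ≤ M) (hNM : N + 1 = 2 * M)
    (σ η : Fin N → ℂ)
    (hσ0 : ∑ i, σ i = 0) (hη0 : ∑ i, η i = 0)
    (hnonint : ∀ i j : Fin N, i ≠ j → ∀ n : ℤ, σ i - σ j ≠ (n : ℂ))
    (Sg ζ : Fin N → ℂ)
    (hSg : ∀ i, Sg i = Complex.exp (2 * Real.pi * Complex.I * σ i))
    (hζ : ∀ i, ζ i = Complex.exp (2 * Real.pi * Complex.I * η i)) :
    ((((Matrix.vandermonde Sg)⁻¹ * Matrix.diagonal ζ * Matrix.vandermonde Sg).submatrix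
        (fun i : Fin M => (⟨N - M + i.val, by have := i.isLt; omega⟩ : Fin N))
        (Fin.castLE (by omega : M ≤ N))).det)
      =
    ∑ S ∈ Finset.powersetCard M (Finset.univ : Finset (Fin N)),
      Complex.exp (Real.pi * Complex.I *
          ∑ i ∈ S, (2 * η i - ((N : ℂ) - 2 * ((i : ℕ) : ℂ) - 1) / 2 + σ i)) *
        ∏ p ∈ (Finset.univ ×ˢ Finset.univ).filter
            (fun p : Fin N × Fin N => p.1 < p.2 ∧ ¬((p.1 ∈ S) ↔ (p.2 ∈ S))),
          (2 * Complex.sin ((Real.pi : ℂ) * (σ p.1 - σ p.2)))⁻¹ := by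
  have hcoeff : (2 * M - N : ℂ) = 1 := sub_eq_of_eq_add' (by exact_mod_cast hNM.symm)
  simpa [hσ0, hcoeff] using
    bottomLeft_minor_odd_quantization_general N M (by omega) σ η hnonint Sg ζ hSg hζ
end

section
/- Let N = 2M−1 be an odd positive integer (so M = (N+1)/2). Let σ_1,…,σ_N and η_1,…,η_N be complex numbers with ∑_{i=1}^N σ_i = 0, ∑_{i=1}^N η_i = 0, and σ_i − σ_j ∉ ℤ for all i ≠ j. Set Σ_i = exp(2πi·σ_i) (pairwise distinct), ζ_i = exp(2πi·η_i), and ρ_i = (N−2i+1)/2. Let V be the N×N Vandermonde matrix V_{ij} = Σ_i^{j−1}, T = diag(ζ_1,…,ζ_N), and E = V^{−1}TV. Then the determinant of the bottom-left M×M submatrix of the inverse matrix E^{−1} (rows N−M+1,…,N, columns 1,…,M) equals ∑_{S ⊆ {1,…,N}, |S| = M} exp(iπ ∑_{i∈S}(−2η_i − ρ_i + σ_i)) · ∏ (2 sin(π(σ_i − σ_j)))^{−1}, where the product runs over all pairs 1 ≤ i < j ≤ N such that exactly one of i, j belongs to S. -/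
open Finset Matrix

/-!
Write `x` for the `Σᵢ`, `d` for the `ζᵢ⁻¹`, and `N = K + M`. Since `V * E⁻¹ = diagonal d * V`,
multiplying the corner minor of `E⁻¹` by `det V` gives the determinant of the matrix whose `i`-th
row is `(1, xᵢ, …, xᵢ ^ (K - 1), dᵢ, dᵢ xᵢ, …, dᵢ xᵢ ^ (M - 1))`. Expand it by row multilinearity:
the rows of a set `S` keep their last `M` entries, the others their first `K`. Only `#S = M`
contributes, and then the determinant is block diagonal up to a permutation `e` of the rows, with
two Vandermonde blocks. The same permutation applied to `V` has the same sign, so the quotient by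
`det V` is `∏_{S} dⱼ / ∏_{i ∉ S, j ∈ S} (xⱼ - xᵢ)` with no sign left to compute.

For `x = exp (2πiσ)` each factor is
`xⱼ - xᵢ = exp (iπ (σᵢ + σⱼ + sgn (i - j) / 2)) * 2 sin (π (σ_min - σ_max))`. As `sgn` is
antisymmetric, its sum over `Sᶜ × S` is the sum over all `i` and `j ∈ S`, and
`∑ᵢ sgn (i - j) / 2 = ρⱼ`; this is how `ρ` enters.
-/

section Splitting

variable {κ μ n : Type*}

/-- `e` enumerates the complement of `S` by `κ` and `S` itself by `μ`; with `e` read as a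
reordering of the rows of a matrix, the rows in `S` come last. -/
def IsSplitting (e : κ ⊕ μ ≃ n) (S : Finset n) : Prop :=
  ∀ c, e c ∈ S ↔ c.isRight

namespace IsSplitting

variable {e : κ ⊕ μ ≃ n} {S : Finset n}

lemma map_inr_eq [Fintype μ] (he : IsSplitting e S) :
    univ.map (Function.Embedding.inr.trans e.toEmbedding) = S := by
  ext i
  obtain ⟨c, rfl⟩ := e.surjective i
  rcases c with k | m <;> simp [he _]

lemma map_inl_eq [Fintype κ] [Fintype n] [DecidableEq n] (he : IsSplitting e S) :
    univ.map (Function.Embedding.inl.trans e.toEmbedding) = Sᶜ := by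
  ext i
  obtain ⟨c, rfl⟩ := e.surjective i
  rcases c with k | m <;> simp [he _]

lemma card_eq [Fintype μ] (he : IsSplitting e S) : #S = Fintype.card μ := by
  rw [← he.map_inr_eq, card_map, card_univ]

lemma prod_eq [Fintype μ] {R : Type*} [CommMonoid R] (he : IsSplitting e S) (g : n → R) :
    ∏ j ∈ S, g j = ∏ m, g (e (.inr m)) := by
  simp [← he.map_inr_eq]

lemma prod_compl_eq [Fintype κ] [Fintype n] [DecidableEq n] {R : Type*} [CommMonoid R]
    (he : IsSplitting e S) (g : n → R) : ∏ i ∈ Sᶜ, g i = ∏ k, g (e (.inl k)) := by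
  simp [← he.map_inl_eq]

end IsSplitting

lemma exists_isSplitting [Finite κ] [Fintype μ] (f : κ ⊕ μ ≃ n) {S : Finset n}
    (hS : #S = Fintype.card μ) : ∃ e : κ ⊕ μ ≃ n, IsSplitting e S := by
  classical
  cases nonempty_fintype κ
  let _ : Fintype n := Fintype.ofEquiv _ f
  have hn : Fintype.card κ + Fintype.card μ = Fintype.card n := by
    rw [← Fintype.card_sum, Fintype.card_congr f]
  let eκ : κ ≃ {i // i ∉ S} :=
    Fintype.equivOfCardEq (by rw [Fintype.card_subtype_compl, Fintype.card_coe]; omega)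
  let eμ : μ ≃ {i // i ∈ S} := Fintype.equivOfCardEq (by rw [Fintype.card_coe, hS])
  refine ⟨(eκ.sumCongr eμ).trans ((Equiv.sumComm _ _).trans (Equiv.sumCompl (· ∈ S))), ?_⟩
  rintro (k | m)
  · simpa using (eκ k).2
  · simp

end Splitting

section ColumnBlocks

variable {R κ μ n : Type*} [CommRing R]

lemma det_submatrix_left_eq_sign_mul [Fintype κ] [DecidableEq κ] (e f : κ ≃ n) (X : Matrix n κ R) :
    (X.submatrix f id).det =
      (Equiv.Perm.sign (f.trans e.symm) : ℤ) * (X.submatrix e id).det := by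
  rw [← det_permute, submatrix_submatrix]
  congr 2
  ext; simp

variable [DecidableEq n]

/-- The matrix obtained from `fromCols A B` by erasing the `A`-part of the rows in `S` and the
`B`-part of the other rows. These are the terms of the expansion of `det (fromCols A B)`. -/
def splitRows (A : Matrix n κ R) (B : Matrix n μ R) (S : Finset n) : Matrix n (κ ⊕ μ) R :=
  of fun i ↦ if i ∈ S then Sum.elim 0 (B i) else Sum.elim (A i) 0

variable [Fintype κ] [DecidableEq κ] [Fintype μ] [DecidableEq μ]

lemma IsSplitting.det_splitRows {e : κ ⊕ μ ≃ n} {S : Finset n} (he : IsSplitting e S)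
    (A : Matrix n κ R) (B : Matrix n μ R) :
    ((splitRows A B S).submatrix e id).det =
      (A.submatrix (e ∘ Sum.inl) id).det * (B.submatrix (e ∘ Sum.inr) id).det := by
  rw [← det_fromBlocks_zero₂₁ _ 0]
  congr 1
  ext (k | m) (l | l) <;> simp [splitRows, he _]

lemma det_splitRows_eq_zero (f : κ ⊕ μ ≃ n) (A : Matrix n κ R) (B : Matrix n μ R) {S : Finset n}
    (hS : #S ≠ Fintype.card μ) : ((splitRows A B S).submatrix f id).det = 0 := by
  by_contra hdet
  simp only [det_apply, submatrix_apply, id_eq] at hdet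
  obtain ⟨p, -, hp⟩ := exists_ne_zero_of_sum_ne_zero hdet
  have hentry (c : κ ⊕ μ) : splitRows A B S (f (p c)) c ≠ 0 := fun h ↦
    hp (by rw [prod_eq_zero (f := fun c ↦ splitRows A B S (f (p c)) c) (mem_univ c) h, smul_zero])
  have hsplit : IsSplitting (p.trans f) S := by
    rintro (k | m)
    · have hk : f (p (.inl k)) ∉ S := fun h ↦ hentry (.inl k) (by simp [splitRows, h])
      simpa using hk
    · have hm : f (p (.inr m)) ∈ S := by
        by_contra h
        exact hentry (.inr m) (by simp [splitRows, h])
      simpa using hm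
  exact hS hsplit.card_eq

variable [Fintype n]

theorem det_fromCols_eq_sum_splitRows (f : κ ⊕ μ ≃ n) (A : Matrix n κ R) (B : Matrix n μ R) :
    ((fromCols A B).submatrix f id).det =
      ∑ S ∈ powersetCard (Fintype.card μ) univ, ((splitRows A B S).submatrix f id).det := by
  have hadd : fromCols A B = fromCols 0 B + fromCols A 0 := by
    ext i (k | m) <;> simp
  calc ((fromCols A B).submatrix f id).det
      = ∑ S, ((splitRows A B S).submatrix f id).det := by
        rw [hadd]
        exact (detRowAlternating.toMultilinearMap.domDomCongr f).map_add_univ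
          (fromCols 0 B) (fromCols A 0)
    _ = ∑ S ∈ powersetCard (Fintype.card μ) univ, ((splitRows A B S).submatrix f id).det := by
        refine (sum_subset (subset_univ _) fun S _ hS ↦ ?_).symm
        exact det_splitRows_eq_zero f A B (by simpa [mem_powersetCard] using hS)

theorem det_mul_det_submatrix (f : κ ⊕ μ ≃ n) (g : μ → n) (V E : Matrix n n R) :
    V.det * (E.submatrix (f ∘ Sum.inr) g).det =
      ((fromCols (V.submatrix id (f ∘ Sum.inl)) ((V * E).submatrix id g)).submatrix f id).det := by
  have hblocks : (fromCols (V.submatrix id (f ∘ Sum.inl)) ((V * E).submatrix id g)).submatrix f id =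
      V.submatrix f f * fromBlocks 1 (E.submatrix (f ∘ Sum.inl) g)
        0 (E.submatrix (f ∘ Sum.inr) g) := by
    ext c (k | m)
    · simp [mul_apply, Matrix.one_apply]
    · simp [mul_apply, ← f.sum_comp]
  rw [hblocks, det_mul, det_submatrix_equiv_self, det_fromBlocks_zero₂₁, det_one, one_mul]

lemma inv_conj_diagonal {V : Matrix n n R} (hV : IsUnit V.det) {d d' : n → R} (hd : d * d' = 1) :
    (V⁻¹ * diagonal d * V)⁻¹ = V⁻¹ * diagonal d' * V := by
  have hdiag : (diagonal d)⁻¹ = diagonal d' := by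
    refine inv_eq_right_inv ?_
    rw [diagonal_mul_diagonal, ← Pi.mul_def, hd, diagonal_one']
  rw [Matrix.mul_inv_rev, Matrix.mul_inv_rev, nonsing_inv_nonsing_inv _ hV, hdiag,
    Matrix.mul_assoc]

end ColumnBlocks

section Vandermonde

lemma det_vandermonde_comp_finSumFinEquiv_symm {R : Type*} [CommRing R] {K M : ℕ}
    (y : Fin K ⊕ Fin M → R) :
    (vandermonde (y ∘ finSumFinEquiv.symm)).det =
      (vandermonde (y ∘ Sum.inl)).det * (vandermonde (y ∘ Sum.inr)).det *
        ∏ k, ∏ m, (y (.inr m) - y (.inl k)) := by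
  have hIoi {n : ℕ} (i : Fin n) : Ioi i = univ.filter (i < ·) := by ext; simp
  have hlt (k : Fin K) (m : Fin M) : Fin.castAdd M k < Fin.natAdd K m := by
    rw [Fin.lt_def, Fin.val_castAdd, Fin.val_natAdd]; omega
  simp only [det_vandermonde, hIoi, prod_filter, Fin.prod_univ_add, Function.comp_apply,
    finSumFinEquiv_symm_apply_castAdd, finSumFinEquiv_symm_apply_natAdd, prod_mul_distrib,
    hlt, (hlt _ _).not_gt, if_true, if_false, prod_const_one, Fin.natAdd_lt_natAdd_iff,
    (Fin.strictMono_castAdd M).lt_iff_lt]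
  ring

lemma det_splitRows_vandermonde_mul_prod_sub {R : Type*} [CommRing R] {K M : ℕ}
    (x d : Fin (K + M) → R) {S : Finset (Fin (K + M))} (hS : #S = M) :
    ((splitRows ((vandermonde x).submatrix id (finSumFinEquiv ∘ Sum.inl))
        ((diagonal d * vandermonde x).submatrix id (Fin.castLE (Nat.le_add_left M K)))
        S).submatrix finSumFinEquiv id).det * ∏ i ∈ Sᶜ, ∏ j ∈ S, (x j - x i) =
      (∏ j ∈ S, d j) * (vandermonde x).det := by
  obtain ⟨e, he⟩ := exists_isSplitting finSumFinEquiv (hS.trans (Fintype.card_fin M).symm)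
  have hA : ((vandermonde x).submatrix id (finSumFinEquiv ∘ Sum.inl)).submatrix (e ∘ Sum.inl) id =
      vandermonde (x ∘ e ∘ Sum.inl) := by
    ext k l; simp [vandermonde_apply]
  have hB : ((diagonal d * vandermonde x).submatrix id
      (Fin.castLE (Nat.le_add_left M K))).submatrix (e ∘ Sum.inr) id =
      of fun m l ↦ d (e (.inr m)) * vandermonde (x ∘ e ∘ Sum.inr) m l := by
    ext m l; simp [vandermonde_apply]
  have hV : ((vandermonde x).submatrix id finSumFinEquiv).submatrix e id =
      (vandermonde ((x ∘ e) ∘ finSumFinEquiv.symm)).submatrix finSumFinEquiv finSumFinEquiv := by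
    ext c l; simp [vandermonde_apply]
  have hVdet : (vandermonde x).det =
      (((vandermonde x).submatrix id finSumFinEquiv).submatrix finSumFinEquiv id).det :=
    (det_submatrix_equiv_self finSumFinEquiv _).symm
  rw [hVdet, det_submatrix_left_eq_sign_mul e finSumFinEquiv,
    det_submatrix_left_eq_sign_mul e finSumFinEquiv, hV, det_submatrix_equiv_self,
    det_vandermonde_comp_finSumFinEquiv_symm, he.det_splitRows, hA, hB, det_mul_column]
  simp only [he.prod_eq, he.prod_compl_eq, Function.comp_apply, Function.comp_assoc]
  ring

theorem det_bottomLeft_conj_diagonal_vandermonde {F : Type*} [Field F] {K M : ℕ}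
    {x : Fin (K + M) → F} (hx : Function.Injective x) (d : Fin (K + M) → F) :
    (((vandermonde x)⁻¹ * diagonal d * vandermonde x).submatrix (Fin.natAdd K)
        (Fin.castLE (Nat.le_add_left M K))).det =
      ∑ S ∈ powersetCard M univ, (∏ j ∈ S, d j) * (∏ i ∈ Sᶜ, ∏ j ∈ S, (x j - x i))⁻¹ := by
  have hdet : (vandermonde x).det ≠ 0 := det_vandermonde_ne_zero_iff.mpr hx
  have hconj : vandermonde x * ((vandermonde x)⁻¹ * diagonal d * vandermonde x) =
      diagonal d * vandermonde x := by
    rw [Matrix.mul_assoc, mul_nonsing_inv_cancel_left _ _ hdet.isUnit]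
  have hrows : Fin.natAdd K = finSumFinEquiv ∘ Sum.inr (α := Fin K) (β := Fin M) := rfl
  apply mul_left_cancel₀ hdet
  rw [hrows, det_mul_det_submatrix, hconj, det_fromCols_eq_sum_splitRows, Fintype.card_fin,
    mul_sum]
  refine sum_congr rfl fun S hS ↦ ?_
  have hprod : ∏ i ∈ Sᶜ, ∏ j ∈ S, (x j - x i) ≠ 0 := by
    refine prod_ne_zero_iff.mpr fun i hi ↦ prod_ne_zero_iff.mpr fun j hj ↦ sub_ne_zero.mpr ?_
    rintro h
    exact mem_compl.mp hi (hx h ▸ hj)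
  rw [mul_left_comm, ← mul_assoc, eq_mul_inv_iff_mul_eq₀ hprod,
    det_splitRows_vandermonde_mul_prod_sub x d (mem_powersetCard.mp hS).2]

end Vandermonde

section SinProduct

open Complex

lemma prod_compl_prod_min_max {α R : Type*} [Fintype α] [LinearOrder α] [CommMonoid R]
    (S : Finset α) (g : α → α → R) :
    ∏ i ∈ Sᶜ, ∏ j ∈ S, g (min i j) (max i j) =
      ∏ p ∈ (univ ×ˢ univ).filter (fun p : α × α ↦ p.1 < p.2 ∧ ¬(p.1 ∈ S ↔ p.2 ∈ S)),
        g p.1 p.2 := by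
  rw [← prod_product']
  refine prod_nbij' (fun p ↦ (min p.1 p.2, max p.1 p.2))
    (fun p ↦ if p.1 ∈ S then (p.2, p.1) else p) ?_ ?_ ?_ ?_ fun _ _ ↦ rfl
  all_goals rintro ⟨i, j⟩ h
  · simp only [mem_product, mem_compl] at h
    have hne : i ≠ j := fun hij ↦ h.1 (hij ▸ h.2)
    rcases hne.lt_or_gt with hij | hij <;> simp [hij, hij.le, h.1, h.2]
  · by_cases hi : i ∈ S <;> simp_all
  · simp only [mem_product, mem_compl] at h
    rcases le_total i j with hij | hij <;> simp [hij, h.1, h.2]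
  · by_cases hi : i ∈ S <;> simp_all [le_of_lt]

lemma sum_compl_sum_of_antisymm {α G : Type*} [Fintype α] [DecidableEq α] [AddCommGroup G]
    [IsAddTorsionFree G] {s : α → α → G} (hs : ∀ i j, s j i = -s i j) (S : Finset α) :
    ∑ i ∈ Sᶜ, ∑ j ∈ S, s i j = ∑ j ∈ S, ∑ i, s i j := by
  have hSS : ∑ j ∈ S, ∑ i ∈ S, s i j = 0 := by
    rw [← self_eq_neg]
    nth_rw 1 [sum_comm]
    simp only [← sum_neg_distrib, ← hs]
  simp only [← sum_add_sum_compl S (s · _), sum_add_distrib, hSS, zero_add]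
  exact sum_comm

lemma sum_int_sign_sub {n : ℕ} (j : Fin n) :
    ∑ i : Fin n, Int.sign ((i : ℤ) - j) = n - 2 * j - 1 := by
  have hsign (i : Fin n) : Int.sign ((i : ℤ) - j) =
      (if j < i then 1 else 0) - (if i < j then 1 else 0) := by
    rcases lt_trichotomy i j with h | rfl | h
    · simp [h, h.not_gt, Int.sign_eq_neg_one_of_neg]
    · simp
    · simp [h, h.not_gt, Int.sign_eq_one_of_pos]
  simp only [hsign, sum_sub_distrib, sum_boole, Finset.filter_lt_eq_Ioi, Finset.filter_gt_eq_Iio,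
    Fin.card_Ioi, Fin.card_Iio]
  omega

lemma sum_compl_sum_int_sign_sub {n : ℕ} (S : Finset (Fin n)) :
    ∑ i ∈ Sᶜ, ∑ j ∈ S, Int.sign ((i : ℤ) - j) = ∑ j ∈ S, ((n : ℤ) - 2 * j - 1) := by
  rw [sum_compl_sum_of_antisymm fun i j ↦ by rw [← neg_sub, Int.sign_neg]]
  exact sum_congr rfl fun j _ ↦ sum_int_sign_sub j

lemma sum_compl_sum_add {α R : Type*} [Fintype α] [DecidableEq α] [CommRing R] (S : Finset α)
    (f : α → R) :
    ∑ i ∈ Sᶜ, ∑ j ∈ S, (f i + f j) =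
      #S * ∑ i, f i + ∑ i ∈ S, ((Fintype.card α : R) - 2 * #S) * f i := by
  have hcard : (#Sᶜ : R) = Fintype.card α - #S := by
    rw [eq_sub_iff_add_eq', ← Nat.cast_add, card_add_card_compl]
  simp only [sum_add_distrib, sum_const, nsmul_eq_mul, ← mul_sum, hcard, ← sum_add_sum_compl S f]
  ring

lemma exp_two_pi_I_mul_sub_exp (a b : ℂ) :
    exp (2 * Real.pi * I * b) - exp (2 * Real.pi * I * a) =
      exp (Real.pi * I * (a + b)) * I * (2 * sin (Real.pi * (b - a))) := by
  have hb : 2 * Real.pi * I * b = Real.pi * I * (a + b) + Real.pi * (b - a) * I := by ring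
  have ha : 2 * Real.pi * I * a = Real.pi * I * (a + b) + -(Real.pi * (b - a)) * I := by ring
  rw [hb, ha, exp_add, exp_add, two_sin]
  linear_combination exp (Real.pi * I * (a + b)) * (exp (-(Real.pi * (b - a)) * I)
    - exp (Real.pi * (b - a) * I)) * (-I_sq)

lemma exp_two_pi_I_mul_sub_exp_eq_sin_min_max {n : ℕ} (σ : Fin n → ℂ) {i j : Fin n} (hij : i ≠ j) :
    exp (2 * Real.pi * I * σ j) - exp (2 * Real.pi * I * σ i) =
      exp (Real.pi * I * (σ i + σ j + (Int.sign ((i : ℤ) - j) : ℤ) / 2)) *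
        (2 * sin (Real.pi * (σ (min i j) - σ (max i j)))) := by
  rw [exp_two_pi_I_mul_sub_exp, mul_add _ (σ i + σ j), exp_add]
  rcases hij.lt_or_gt with h | h
  · have hsign : Int.sign ((i : ℤ) - j) = -1 := Int.sign_eq_neg_one_of_neg (by simpa using h)
    have hexp : exp (Real.pi * I * ((-1 : ℤ) / 2)) = -I :=
      (congrArg exp (by push_cast; ring)).trans exp_neg_pi_div_two_mul_I
    rw [hsign, hexp, min_eq_left h.le, max_eq_right h.le, ← neg_sub (σ i), mul_neg, sin_neg]
    ring
  · have hsign : Int.sign ((i : ℤ) - j) = 1 := Int.sign_eq_one_of_pos (by simpa using h)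
    have hexp : exp (Real.pi * I * ((1 : ℤ) / 2)) = I :=
      (congrArg exp (by push_cast; ring)).trans exp_pi_div_two_mul_I
    rw [hsign, hexp, min_eq_right h.le, max_eq_left h.le]

theorem prod_compl_prod_exp_sub_exp {n : ℕ} (σ : Fin n → ℂ) (S : Finset (Fin n)) :
    ∏ i ∈ Sᶜ, ∏ j ∈ S, (exp (2 * Real.pi * I * σ j) - exp (2 * Real.pi * I * σ i)) =
      exp (Real.pi * I * (#S * ∑ i, σ i +
        ∑ i ∈ S, (((n : ℂ) - 2 * #S) * σ i + ((n : ℂ) - 2 * (i : ℕ) - 1) / 2))) *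
      ∏ p ∈ (univ ×ˢ univ).filter
          (fun p : Fin n × Fin n ↦ p.1 < p.2 ∧ ¬(p.1 ∈ S ↔ p.2 ∈ S)),
        (2 * sin (Real.pi * (σ p.1 - σ p.2))) := by
  let g (i j : Fin n) : ℂ := 2 * sin (Real.pi * (σ i - σ j))
  have hfactor : ∀ i ∈ Sᶜ, ∀ j ∈ S, exp (2 * Real.pi * I * σ j) - exp (2 * Real.pi * I * σ i) =
      exp (Real.pi * I * (σ i + σ j + (Int.sign ((i : ℤ) - j) : ℤ) / 2)) *
        g (min i j) (max i j) := fun i hi j hj ↦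
    exp_two_pi_I_mul_sub_exp_eq_sin_min_max σ fun hij ↦ mem_compl.mp hi (hij ▸ hj)
  have hphase : ∑ i ∈ Sᶜ, ∑ j ∈ S, (σ i + σ j + (Int.sign ((i : ℤ) - j) : ℤ) / 2) =
      #S * ∑ i, σ i + ∑ i ∈ S, (((n : ℂ) - 2 * #S) * σ i + ((n : ℂ) - 2 * (i : ℕ) - 1) / 2) := by
    have hsign := congrArg (Int.cast : ℤ → ℂ) (sum_compl_sum_int_sign_sub S)
    push_cast at hsign
    calc ∑ i ∈ Sᶜ, ∑ j ∈ S, (σ i + σ j + (Int.sign ((i : ℤ) - j) : ℤ) / 2)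
        = ∑ i ∈ Sᶜ, ∑ j ∈ S, (σ i + σ j) +
            (∑ i ∈ Sᶜ, ∑ j ∈ S, (Int.sign ((i : ℤ) - j) : ℂ)) / 2 := by
          simp_rw [sum_div, ← sum_add_distrib]
      _ = _ := by
          rw [hsign, sum_compl_sum_add, Fintype.card_fin, sum_div, add_assoc, ← sum_add_distrib]
  calc ∏ i ∈ Sᶜ, ∏ j ∈ S, (exp (2 * Real.pi * I * σ j) - exp (2 * Real.pi * I * σ i))
      = (∏ i ∈ Sᶜ, ∏ j ∈ S, exp (Real.pi * I * (σ i + σ j + (Int.sign ((i : ℤ) - j) : ℤ) / 2))) *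
          ∏ i ∈ Sᶜ, ∏ j ∈ S, g (min i j) (max i j) := by
        rw [prod_congr rfl fun i hi ↦ prod_congr rfl (hfactor i hi)]
        simp only [prod_mul_distrib]
    _ = _ := by
        simp only [← exp_sum, ← mul_sum, hphase, prod_compl_prod_min_max S g, g]

end SinProduct

open Complex in
lemma injective_exp_two_pi_I_mul {ι : Type*} {σ : ι → ℂ}
    (hσ : ∀ i j, i ≠ j → ∀ n : ℤ, σ i - σ j ≠ n) :
    Function.Injective fun i ↦ exp (2 * Real.pi * I * σ i) := by
  intro i j hij
  by_contra hne
  obtain ⟨n, hn⟩ := exp_eq_exp_iff_exists_int.mp hij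
  refine hσ i j hne n (mul_left_cancel₀ two_pi_I_ne_zero ?_)
  linear_combination hn

theorem bottomLeft_minor_inv_odd_quantization_general
    (N M : ℕ) (hMN : M ≤ N) (σ η : Fin N → ℂ)
    (hnonint : ∀ i j : Fin N, i ≠ j → ∀ n : ℤ, σ i - σ j ≠ (n : ℂ))
    (Sg ζ : Fin N → ℂ)
    (hSg : ∀ i, Sg i = Complex.exp (2 * Real.pi * Complex.I * σ i))
    (hζ : ∀ i, ζ i = Complex.exp (2 * Real.pi * Complex.I * η i)) :
    ((((vandermonde Sg)⁻¹ * diagonal ζ * vandermonde Sg)⁻¹).submatrix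
        (fun i : Fin M ↦ (⟨N - M + i.val, by have := i.isLt; omega⟩ : Fin N))
        (Fin.castLE hMN)).det =
      Complex.exp (-(Real.pi * Complex.I * (M * ∑ i, σ i))) *
      ∑ S ∈ powersetCard M (univ : Finset (Fin N)),
        Complex.exp (Real.pi * Complex.I * ∑ i ∈ S,
          (-2 * η i - ((N : ℂ) - 2 * ((i : ℕ) : ℂ) - 1) / 2 + (2 * (M : ℂ) - N) * σ i)) *
        ∏ p ∈ (univ ×ˢ univ).filter
            (fun p : Fin N × Fin N ↦ p.1 < p.2 ∧ ¬((p.1 ∈ S) ↔ (p.2 ∈ S))),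
          (2 * Complex.sin ((Real.pi : ℂ) * (σ p.1 - σ p.2)))⁻¹ := by
  obtain ⟨K, rfl⟩ := Nat.exists_eq_add_of_le' hMN
  obtain rfl : Sg = fun i ↦ Complex.exp (2 * Real.pi * Complex.I * σ i) := funext hSg
  obtain rfl : ζ = fun i ↦ Complex.exp (2 * Real.pi * Complex.I * η i) := funext hζ
  have hinj := injective_exp_two_pi_I_mul hnonint
  have hζinv : (fun i ↦ Complex.exp (2 * Real.pi * Complex.I * η i)) *
      (fun i ↦ Complex.exp (-(2 * Real.pi * Complex.I * η i))) = 1 := by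
    ext i
    simp [← Complex.exp_add]
  have hrows : (fun i : Fin M ↦ (⟨K + M - M + i.val, by have := i.isLt; omega⟩ : Fin (K + M))) =
      Fin.natAdd K := by
    ext i; simp
  rw [hrows, inv_conj_diagonal (det_vandermonde_ne_zero_iff.mpr hinj).isUnit hζinv,
    det_bottomLeft_conj_diagonal_vandermonde hinj, mul_sum]
  refine sum_congr rfl fun S hS ↦ ?_
  rw [prod_compl_prod_exp_sub_exp, (mem_powersetCard.mp hS).2, ← Complex.exp_sum, prod_inv_distrib,
    mul_inv, ← Complex.exp_neg, ← mul_assoc, ← mul_assoc, ← Complex.exp_add, ← Complex.exp_add]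
  have hphase : ∑ i ∈ S, (-2 * η i - (((K + M : ℕ) : ℂ) - 2 * (i : ℕ) - 1) / 2 +
        (2 * M - (K + M : ℕ)) * σ i) = -2 * ∑ i ∈ S, η i -
      ∑ i ∈ S, ((((K + M : ℕ) : ℂ) - 2 * M) * σ i + (((K + M : ℕ) : ℂ) - 2 * (i : ℕ) - 1) / 2) := by
    rw [mul_sum, ← sum_sub_distrib]
    exact sum_congr rfl fun i _ ↦ by ring
  congr 2
  rw [hphase, sum_neg_distrib, ← mul_sum]
  ring

/-- N odd, M = (N+1)/2: the determinant of the bottom-left M×M submatrix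
of E⁻¹, where E = V⁻¹ T V, equals
∑_{S ⊆ {1,…,N}, |S| = M} exp(iπ ∑_{i∈S}(−2ηᵢ − ρᵢ + σᵢ)) ∏ (2 sin(π(σᵢ − σⱼ)))⁻¹,
the product over pairs i < j with exactly one of i, j in S. -/
theorem bottomLeft_minor_inv_odd_quantization
    (N M : ℕ) (hM : 1 ≤ M) (hNM : N + 1 = 2 * M)
    (σ η : Fin N → ℂ)
    (hσ0 : ∑ i, σ i = 0) (hη0 : ∑ i, η i = 0)
    (hnonint : ∀ i j : Fin N, i ≠ j → ∀ n : ℤ, σ i - σ j ≠ (n : ℂ))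
    (Sg ζ : Fin N → ℂ)
    (hSg : ∀ i, Sg i = Complex.exp (2 * Real.pi * Complex.I * σ i))
    (hζ : ∀ i, ζ i = Complex.exp (2 * Real.pi * Complex.I * η i)) :
    (((((Matrix.vandermonde Sg)⁻¹ * Matrix.diagonal ζ * Matrix.vandermonde Sg)⁻¹).submatrix
        (fun i : Fin M => (⟨N - M + i.val, by have := i.isLt; omega⟩ : Fin N))
        (Fin.castLE (by omega : M ≤ N))).det)
      =
    ∑ S ∈ Finset.powersetCard M (Finset.univ : Finset (Fin N)),
      Complex.exp (Real.pi * Complex.I *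
          ∑ i ∈ S, (-2 * η i - ((N : ℂ) - 2 * ((i : ℕ) : ℂ) - 1) / 2 + σ i)) *
        ∏ p ∈ (Finset.univ ×ˢ Finset.univ).filter
            (fun p : Fin N × Fin N => p.1 < p.2 ∧ ¬((p.1 ∈ S) ↔ (p.2 ∈ S))),
          (2 * Complex.sin ((Real.pi : ℂ) * (σ p.1 - σ p.2)))⁻¹ := by
  have hσ_coeff : 2 * (M : ℂ) - N = 1 := sub_eq_of_eq_add' (mod_cast hNM.symm)
  simp [bottomLeft_minor_inv_odd_quantization_general N M (by omega) σ η hnonint Sg ζ hSg hζ,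
    hσ0, hσ_coeff]
end
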